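/- Let α ∈ (0,1) be irrational and let F : W_α → ℝ be a nonnegative subadditive function. Then for every n ≥ 1, limsup_{|w|→∞, w ∈ W_α} F(w)/|w| ≤ max{ F(s_n)/|s_n| , F(s_{n−1})/|s_{n−1}| }. Consequently limsup_{|w|→∞, w ∈ W_α} F(w)/|w| ≤ inf_{n≥1} max{ F(s_n)/|s_n| , F(s_{n−1})/|s_{n−1}| }. -/

import Mathlib

open scoped Classical

noncomputable section

/-- The Sturmian potential `v_{α,θ}(n) = χ_{[1-α,1)}(nα + θ mod 1)`. -/
def sturmian (α θ : ℝ) (n : ℤ) : ℝ :=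
  if Int.fract (n * α + θ) ∈ Set.Ico (1 - α) 1 then 1 else 0

/-- Iterates of the Gauss map, starting at `α`. -/
def cfGauss (α : ℝ) : ℕ → ℝ
  | 0 => α
  | n + 1 => Int.fract (cfGauss α n)⁻¹

/-- The continued fraction coefficients `a_n` of `α = [a_1, a_2, …]` (for `n ≥ 1`):
`a_1 = ⌊1/α⌋`, `a_2 = ⌊1/fract(1/α)⌋`, … . -/
def cfCoeff (α : ℝ) (n : ℕ) : ℕ := ⌊(cfGauss α (n - 1))⁻¹⌋₊

/-- The standard words, with an index shift: `sWord a n` is `s_{n-1}`.  Thus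
`sWord a 0 = s_{-1} = 1`, `sWord a 1 = s_0 = 0`, `sWord a 2 = s_1 = 0^{a_1 - 1} 1`, and
`sWord a (n+1) = s_n = s_{n-1}^{a_n} s_{n-2}` for `n ≥ 2`. -/
def sWord (a : ℕ → ℕ) : ℕ → List ℝ
  | 0 => [1]
  | 1 => [0]
  | 2 => List.replicate (a 1 - 1) (0 : ℝ) ++ [1]
  | n + 3 => (List.replicate (a (n + 2)) (sWord a (n + 2))).flatten ++ sWord a (n + 1)

/-- The `n`-th letter (for `n ≥ 1`) of the one-sided infinite word `c_α = lim s_n`: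
since `|s_n| ≥ n`, it is the `n`-th letter of `s_n`. -/
def cword (α : ℝ) (n : ℕ) : ℝ := (sWord (cfCoeff α) (n + 1)).getD (n - 1) 0

/-- `w` is a (finite) prefix of the one-sided infinite word `c_α`. -/
def IsPrefC (α : ℝ) (w : List ℝ) : Prop :=
  w = (List.range w.length).map fun i => cword α (i + 1)

/-- The one-step transfer matrix `T(λ,E,a) = [[E - λa, -1], [1, 0]]`. -/
def transferT (lam : ℝ) (E : ℂ) (a : ℝ) : Matrix (Fin 2) (Fin 2) ℂ :=
  !![E - lam * a, -1; 1, 0]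

/-- The transfer matrix over a word `w = w_1 … w_n`:
`M(λ,E,w) = T(λ,E,w_n) ⋯ T(λ,E,w_1)`. -/
def transferM (lam : ℝ) (E : ℂ) : List ℝ → Matrix (Fin 2) (Fin 2) ℂ
  | [] => 1
  | a :: w => transferM lam E w * transferT lam E a

/-- The operator norm on `ℂ²` (with the euclidean norm) of a `2 × 2` complex matrix. -/
def opNorm (A : Matrix (Fin 2) (Fin 2) ℂ) : ℝ :=
  ‖Matrix.toEuclideanCLM (𝕜 := ℂ) A‖

/-- The word `v_{α,θ}^n = v_{α,θ}(1) … v_{α,θ}(n)`. -/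
def sturmianWord (α θ : ℝ) (n : ℕ) : List ℝ :=
  (List.range n).map fun k => sturmian α θ (k + 1)

/-- The set of finite nonempty subwords of a two-sided sequence `v : ℤ → ℝ`. -/
def SubZ (v : ℤ → ℝ) : Set (List ℝ) :=
  {w | w ≠ [] ∧ ∃ k : ℤ, w = (List.range w.length).map fun i => v (k + i)}

/-- The set of finite nonempty subwords of the one-sided word `c_α` (indexed from `1`). -/
def SubC (α : ℝ) : Set (List ℝ) :=
  {w | w ≠ [] ∧ ∃ k : ℕ, 1 ≤ k ∧ w = (List.range w.length).map fun i => cword α (k + i)}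

/-- `W_α`, the set of all finite nonempty subwords of the sequences `v_{α,θ}`, `θ ∈ [0,1)`. -/
def Walpha (α : ℝ) : Set (List ℝ) :=
  {w | ∃ θ ∈ Set.Ico (0 : ℝ) 1, w ∈ SubZ (sturmian α θ)}

/-- `α` is a bounded density number: `limsup_{n→∞} (1/n) ∑_{j=1}^n a_j < ∞` for the
continued fraction coefficients `a_j` of `α`. -/
def BoundedDensity (α : ℝ) : Prop :=
  Filter.IsBoundedUnder (· ≤ ·) Filter.atTop
    (fun n : ℕ => (1 / n : ℝ) * ∑ j ∈ Finset.Icc 1 n, (cfCoeff α j : ℝ))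

end

/-!
Every `w ∈ W_α` splits, up to boundary pieces of length bounded in terms of `n` only, into blocks
`s_n` and `s_{n-1}`. Subadditivity then gives `F w ≤ M |w| + C` with `M` the larger of the two
block averages and `C` independent of `w`; divide by `|w|`.

The splitting comes from renormalising the rotation, written as the exchange of two intervals of
lengths `ρ` and `1`. If `ρ = b + g` with `b ∈ ℕ` and `0 < g < 1`, then the first return map to
`[0, 1 + g]` is again such an exchange, rescaled by `1 / g` and reflected, with ratio `1 / g`; its
two branches read the words `0 ^ b 1` and `0`. Starting from `ρ = 1 / α - 1`, this is the recursion
for `(s_n, s_{n-1})`.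
-/

section FactorialLanguages

variable {A : Type*} {W : Set (List A)} {F : List A → ℝ}

/-- A language is factorial if it contains all factors of its words, the empty one included. -/
def IsFactorial (W : Set (List A)) : Prop :=
  ∀ ⦃u w : List A⦄, u <:+: w → w ∈ W → u ∈ W

/-- Subadditivity under concatenations that stay in `W`. Membership of the two parts is left out
because it is automatic in a factorial language. -/
def SubadditiveOn (F : List A → ℝ) (W : Set (List A)) : Prop :=
  ∀ ⦃u v : List A⦄, u ++ v ∈ W → F (u ++ v) ≤ F u + F v

theorem IsFactorial.left_mem (hW : IsFactorial W) {u v : List A} (h : u ++ v ∈ W) : u ∈ W :=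
  hW (List.prefix_append u v).isInfix h

theorem IsFactorial.right_mem (hW : IsFactorial W) {u v : List A} (h : u ++ v ∈ W) : v ∈ W :=
  hW (List.suffix_append u v).isInfix h

theorem IsFactorial.subadditiveOn_update_nil [DecidableEq (List A)]
    (hW : IsFactorial (insert [] W))
    (hF : ∀ u v : List A, u ∈ W → v ∈ W → u ++ v ∈ W → F (u ++ v) ≤ F u + F v) :
    SubadditiveOn (Function.update F [] 0) (insert [] W) := by
  intro u v huv
  rcases eq_or_ne u [] with rfl | hu
  · simp
  rcases eq_or_ne v [] with rfl | hv
  · simp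
  have huv_ne : u ++ v ≠ [] := List.append_ne_nil_of_left_ne_nil hu v
  simpa only [Function.update_of_ne hu, Function.update_of_ne hv, Function.update_of_ne huv_ne]
    using hF u v ((hW.left_mem huv).resolve_left hu) ((hW.right_mem huv).resolve_left hv)
      (huv.resolve_left huv_ne)

theorem SubadditiveOn.flatten_le (hF : SubadditiveOn F W) (hW : IsFactorial W) (hnil : F [] = 0)
    {M : ℝ} {l : List (List A)} (hl : ∀ u ∈ l, F u ≤ M * u.length) (hmem : l.flatten ∈ W) :
    F l.flatten ≤ M * l.flatten.length := by
  induction l with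
  | nil => simp [hnil]
  | cons u l ih =>
    rw [List.flatten_cons] at hmem ⊢
    rw [List.forall_mem_cons] at hl
    calc F (u ++ l.flatten) ≤ F u + F l.flatten := hF hmem
      _ ≤ M * u.length + M * l.flatten.length :=
        add_le_add hl.1 (ih hl.2 (hW.right_mem hmem))
      _ = M * (u ++ l.flatten).length := by
        rw [List.length_append, Nat.cast_add, mul_add]

theorem SubadditiveOn.append_flatten_append_le (hF : SubadditiveOn F W) (hW : IsFactorial W)
    (hnil : F [] = 0) {K M : ℝ} {L : ℕ} (hK : ∀ w ∈ W, F w ≤ K * w.length)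
    {p q : List A} {l : List (List A)} (hl : ∀ u ∈ l, F u ≤ M * u.length)
    (hp : p.length ≤ L) (hq : q.length ≤ L) (hmem : p ++ l.flatten ++ q ∈ W) :
    F (p ++ l.flatten ++ q) ≤ M * (p ++ l.flatten ++ q).length + 2 * (|K - M| * L) := by
  have hmem' := hW.left_mem hmem
  have short {r : List A} (hr : r ∈ W) (hrL : r.length ≤ L) :
      F r ≤ M * r.length + |K - M| * L :=
    calc F r ≤ M * r.length + (K - M) * r.length := by linarith [hK r hr]
      _ ≤ M * r.length + |K - M| * L := by gcongr; exact le_abs_self _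
  have bound_p := short (hW.left_mem hmem') hp
  have bound_q := short (hW.right_mem hmem) hq
  have bound_l := hF.flatten_le hW hnil hl (hW.right_mem hmem')
  simp only [List.length_append, Nat.cast_add]
  linarith [hF hmem, hF hmem']

theorem exists_forall_div_length_le {M C c : ℝ} (hF : ∀ w ∈ W, F w ≤ M * w.length + C)
    (hc : M < c) : ∃ N : ℕ, ∀ w ∈ W, N ≤ w.length → F w / w.length ≤ c := by
  obtain ⟨N, hN⟩ := exists_nat_ge (C / (c - M))
  refine ⟨N + 1, fun w hw hNw => ?_⟩
  have hNw' : (N : ℝ) + 1 ≤ w.length := mod_cast hNw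
  have hC : C ≤ w.length * (c - M) :=
    (div_le_iff₀ (sub_pos.2 hc)).1 (hN.trans (by linarith))
  rw [div_le_iff₀ (by linarith [N.cast_nonneg (α := ℝ)])]
  linarith [hF w hw]

theorem length_flatMap_le {B : Type*} (τ : B → List A) {S : ℕ} (hS : ∀ b, (τ b).length ≤ S)
    (u : List B) : (u.flatMap τ).length ≤ u.length * S := by
  induction u with
  | nil => simp
  | cons b u ih =>
    rw [List.flatMap_cons, List.length_append, List.length_cons]
    linarith [hS b]

end FactorialLanguages

section Renormalisation

/-- `IsItinerary ρ x u` says that `u` codes an orbit segment, started at `x`, of the exchange of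
`[0, ρ]` (letter `false`, translated by `1`) and `[ρ, 1 + ρ]` (letter `true`, translated by `-ρ`),
which is the rotation by `1 / (1 + ρ)` up to scaling. The intervals are closed, and an orbit through
`ρ` may take either branch, because renormalisation reverses the orientation and would not preserve
half-open intervals. -/
inductive IsItinerary (ρ : ℝ) : ℝ → List Bool → Prop
  | nil (x : ℝ) : IsItinerary ρ x []
  | zero {x : ℝ} {u : List Bool} (hx : 0 ≤ x) (hxρ : x ≤ ρ) (hu : IsItinerary ρ (x + 1) u) :
      IsItinerary ρ x (false :: u)
  | one {x : ℝ} {u : List Bool} (hρx : ρ ≤ x) (hx : x ≤ 1 + ρ) (hu : IsItinerary ρ (x - ρ) u) :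
      IsItinerary ρ x (true :: u)

/-- The substitution `0 ↦ 0 ^ b 1`, `1 ↦ 0`, with `false` for `0` and `true` for `1`. -/
def sturmianSubst (b : ℕ) : Bool → List Bool
  | false => List.replicate b false ++ [true]
  | true => [false]

variable {ρ g x : ℝ} {b : ℕ} {u : List Bool}

theorem IsItinerary.exists_eq_replicate_append (h : IsItinerary ρ x u) {m : ℕ}
    (hx : x + m < ρ + 1) (hm : m ≤ u.length) :
    ∃ t, u = List.replicate m false ++ t ∧ IsItinerary ρ (x + m) t := by
  induction m generalizing x u with
  | zero => exact ⟨u, rfl, by simpa using h⟩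
  | succ m ih =>
    push_cast at hx ⊢
    cases h with
    | nil => simp at hm
    | zero _ _ h =>
      obtain ⟨t, rfl, ht⟩ := ih h (by linarith) (by simpa using hm)
      exact ⟨t, rfl, by convert ht using 1; ring⟩
    | one hρx => linarith [m.cast_nonneg (α := ℝ)]

theorem IsItinerary.exists_suffix_mem_Icc (h : IsItinerary ρ x u) {m : ℕ} (hm : ρ < x + m) :
    ∃ p t y, u = p ++ t ∧ p.length ≤ m + 1 ∧ y ∈ Set.Icc 0 1 ∧ IsItinerary ρ y t := by
  induction h generalizing m with
  | nil => exact ⟨[], [], 0, rfl, by simp, by simp, .nil 0⟩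
  | zero _ hxρ _ ih =>
    cases m with
    | zero => exact absurd hm (by simpa using hxρ)
    | succ m =>
      push_cast at hm
      obtain ⟨p, t, y, rfl, hp, hy, ht⟩ := ih (m := m) (by linarith)
      exact ⟨false :: p, t, y, rfl, by simpa using hp, hy, ht⟩
  | one hρx hx hu _ =>
    exact ⟨[true], _, _, rfl, by simp, ⟨by linarith, by linarith⟩, hu⟩

theorem IsItinerary.first_return (hg₀ : 0 < g) (hg₁ : g < 1) (h : IsItinerary (b + g) x u)
    (hx : x ∈ Set.Icc 0 1) (hu : b + 2 ≤ u.length) :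
    (∃ t, u = sturmianSubst b false ++ t ∧ g ≤ x ∧ IsItinerary (b + g) (x - g) t) ∨
    (∃ t, u = sturmianSubst b true ++ sturmianSubst b false ++ t ∧ x ≤ g ∧
      IsItinerary (b + g) (x + 1 - g) t) := by
  obtain ⟨t, rfl, ht⟩ := h.exists_eq_replicate_append (m := b) (by linarith [hx.2]) (by omega)
  cases ht with
  | nil => simp at hu
  | one hρx _ ht =>
    refine .inl ⟨_, List.append_cons _ _ _, by linarith, ?_⟩
    convert ht using 1; ring
  | zero _ hxρ ht =>
    cases ht with
    | nil => simp at hu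
    | zero _ hxρ' => linarith [hx.1]
    | @one _ t _ _ ht =>
      refine .inr ⟨t, ?_, by linarith, ?_⟩
      · rw [List.append_cons, ← List.replicate_succ', List.replicate_succ]
        simp [sturmianSubst]
      · convert ht using 1; ring

theorem IsItinerary.exists_desubstitution_of_mem_Icc {x : ℝ} {u : List Bool} (hg₀ : 0 < g)
    (hg₁ : g < 1) (h : IsItinerary (b + g) x u) (hx : x ∈ Set.Icc 0 1) :
    ∃ v q, u = v.flatMap (sturmianSubst b) ++ q ∧ q.length ≤ b + 1 ∧
      IsItinerary g⁻¹ ((1 + g - x) / g) v := by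
  obtain ⟨hx₀, hx₁⟩ := hx
  by_cases hu : u.length < b + 2
  · exact ⟨[], u, rfl, by omega, .nil _⟩
  rcases h.first_return hg₀ hg₁ ⟨hx₀, hx₁⟩ (not_lt.1 hu) with
    ⟨t, rfl, hgx, ht⟩ | ⟨t, rfl, hxg, ht⟩
  · obtain ⟨v, q, rfl, hq, hv⟩ :=
      ht.exists_desubstitution_of_mem_Icc hg₀ hg₁ ⟨by linarith, by linarith⟩
    refine ⟨false :: v, q, by simp, hq, .zero ?_ ?_ ?_⟩
    · exact div_nonneg (by linarith) hg₀.le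
    · rw [inv_eq_one_div]; gcongr; linarith
    · convert hv using 1; field_simp; ring
  · obtain ⟨v, q, rfl, hq, hv⟩ :=
      ht.exists_desubstitution_of_mem_Icc hg₀ hg₁ ⟨by linarith, by linarith⟩
    have hsub : (1 + g - x) / g - g⁻¹ = (g - x) / g := by field_simp; ring
    refine ⟨true :: false :: v, q, by simp, hq, .one ?_ ?_ (hsub ▸ .zero ?_ ?_ ?_)⟩
    · rw [inv_eq_one_div]; gcongr; linarith
    · rw [div_le_iff₀ hg₀, add_mul, inv_mul_cancel₀ hg₀.ne']; linarith
    · exact div_nonneg (by linarith) hg₀.le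
    · rw [inv_eq_one_div]; gcongr; linarith
    · convert hv using 1; field_simp; ring
termination_by u.length
decreasing_by
  all_goals
    subst_vars
    simp [sturmianSubst]
    omega

theorem IsItinerary.exists_desubstitution (hg₀ : 0 < g) (hg₁ : g < 1)
    (h : IsItinerary (b + g) x u) (hx : 0 ≤ x) :
    ∃ p v q y, u = p ++ v.flatMap (sturmianSubst b) ++ q ∧ p.length ≤ b + 2 ∧
      q.length ≤ b + 2 ∧ 0 ≤ y ∧ IsItinerary g⁻¹ y v := by
  obtain ⟨p, t, y, rfl, hp, hy, ht⟩ :=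
    h.exists_suffix_mem_Icc (m := b + 1) (by push_cast; linarith)
  obtain ⟨v, q, rfl, hq, hv⟩ := ht.exists_desubstitution_of_mem_Icc hg₀ hg₁ hy
  exact ⟨p, v, q, _, by simp, hp, by omega, div_nonneg (by linarith [hy.2]) hg₀.le, hv⟩

end Renormalisation

section ContinuedFraction

variable {α : ℝ}

theorem cfGauss_mem_Ioo (hirr : Irrational α) (hα : α ∈ Set.Ioo (0 : ℝ) 1) (n : ℕ) :
    cfGauss α n ∈ Set.Ioo (0 : ℝ) 1 := by
  have irrational_cfGauss (m : ℕ) : Irrational (cfGauss α m) := by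
    induction m with
    | zero => exact hirr
    | succ m ih => exact ih.inv.sub_intCast _
  cases n with
  | zero => exact hα
  | succ n =>
    exact ⟨(Int.fract_nonneg _).lt_of_ne' (irrational_cfGauss (n + 1)).ne_zero,
      Int.fract_lt_one _⟩

/-- The interval length ratio after `n` renormalisations of the rotation by `α`. -/
noncomputable def levelRatio (α : ℝ) : ℕ → ℝ
  | 0 => α⁻¹ - 1
  | n + 1 => (cfGauss α (n + 1))⁻¹

theorem levelRatio_eq_floor_add (hirr : Irrational α) (hα : α ∈ Set.Ioo (0 : ℝ) 1) (n : ℕ) :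
    levelRatio α n = ⌊levelRatio α n⌋₊ + cfGauss α (n + 1) := by
  have hfract : Int.fract (levelRatio α n) = cfGauss α (n + 1) := by
    cases n with
    | zero => exact Int.fract_sub_one _
    | succ n => rfl
  have hnonneg : 0 ≤ levelRatio α n := by
    cases n with
    | zero => exact sub_nonneg.2 ((one_le_inv₀ hα.1).2 hα.2.le)
    | succ n => exact inv_nonneg.2 (cfGauss_mem_Ioo hirr hα (n + 1)).1.le
  rw [← hfract, natCast_floor_eq_intCast_floor hnonneg, Int.floor_add_fract]

theorem sWord_add_two (α : ℝ) (n : ℕ) :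
    sWord (cfCoeff α) (n + 2) =
      (List.replicate ⌊levelRatio α n⌋₊ (sWord (cfCoeff α) (n + 1))).flatten ++
        sWord (cfCoeff α) n := by
  cases n with
  | zero => simp [sWord, cfCoeff, cfGauss, levelRatio, Nat.floor_sub_one]
  | succ n => rfl

/-- The blocks of level `n`: `s_n` for the letter `false` and `s_{n-1}` for `true`. -/
def standardBlock (a : ℕ → ℕ) (n : ℕ) : Bool → List ℝ
  | false => sWord a (n + 1)
  | true => sWord a n

theorem sWord_ne_nil (a : ℕ → ℕ) : ∀ n, sWord a n ≠ []
  | 0 | 1 | 2 => by simp [sWord]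
  | n + 3 => by simp [sWord, sWord_ne_nil a (n + 1)]

theorem flatMap_standardBlock_sturmianSubst (α : ℝ) (n : ℕ) (c : Bool) :
    (sturmianSubst ⌊levelRatio α n⌋₊ c).flatMap (standardBlock (cfCoeff α) n) =
      standardBlock (cfCoeff α) (n + 1) c := by
  cases c with
  | true => simp [sturmianSubst, standardBlock]
  | false => simp [sturmianSubst, standardBlock, sWord_add_two, List.flatMap]

end ContinuedFraction

section SturmianWords

variable {α θ : ℝ}

theorem mem_SubZ_iff {v : ℤ → ℝ} {w : List ℝ} :
    w ∈ SubZ v ↔ w ≠ [] ∧ ∃ k : ℤ, ∀ (i : ℕ) (hi : i < w.length), w[i] = v (k + i) := by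
  refine and_congr_right fun _ => exists_congr fun k => ?_
  simp only [bind_pure_comp, List.map_eq_map, List.map_map, List.ext_getElem_iff]
  simp

theorem isFactorial_insert_nil_Walpha (α : ℝ) : IsFactorial (insert [] (Walpha α)) := by
  rintro u w huw (rfl | ⟨θ, hθ, hw⟩)
  · exact .inl (List.infix_nil.1 huw)
  rcases eq_or_ne u [] with hu | hu
  · exact .inl hu
  obtain ⟨-, k, hk⟩ := mem_SubZ_iff.1 hw
  obtain ⟨p, q, rfl⟩ := huw
  refine .inr ⟨θ, hθ, mem_SubZ_iff.2 ⟨hu, k + p.length, fun i hi => ?_⟩⟩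
  have hpi := hk (p.length + i) (by simp only [List.length_append]; omega)
  simpa [List.getElem_append_left, hi, add_assoc] using hpi

theorem fract_add_of_lt {t : ℝ} (hα : 0 ≤ α) (h : Int.fract t + α < 1) :
    Int.fract (t + α) = Int.fract t + α :=
  Int.fract_eq_iff.2 ⟨by positivity, h, ⌊t⌋, by rw [← Int.self_sub_floor]; ring⟩

theorem fract_add_of_le {t : ℝ} (hα : α ≤ 1) (h : 1 ≤ Int.fract t + α) :
    Int.fract (t + α) = Int.fract t + α - 1 :=
  Int.fract_eq_iff.2 ⟨by linarith, by linarith [Int.fract_lt_one t], ⌊t⌋ + 1, by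
    rw [← Int.self_sub_floor]; push_cast; ring⟩

theorem exists_isItinerary_of_sturmian (hα : α ∈ Set.Ioo (0 : ℝ) 1) (a : ℕ → ℕ) {w : List ℝ}
    {k : ℤ} (hw : ∀ (i : ℕ) (hi : i < w.length), w[i] = sturmian α θ (k + i)) :
    ∃ u, w = u.flatMap (standardBlock a 0) ∧
      IsItinerary (α⁻¹ - 1) (Int.fract (k * α + θ) / α) u := by
  induction w generalizing k with
  | nil => exact ⟨[], rfl, .nil _⟩
  | cons c w ih =>
    obtain ⟨hα₀, hα₁⟩ := hα
    have hc : c = sturmian α θ k := (hw 0 (by simp)).trans (by simp)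
    obtain ⟨u, rfl, hu⟩ := ih (k := k + 1) fun i hi =>
      (hw (i + 1) (by simpa using hi)).trans (by rw [Nat.cast_succ, add_assoc, add_comm (1 : ℤ)])
    have hnext : ((k + 1 : ℤ) : ℝ) * α + θ = k * α + θ + α := by push_cast; ring
    have hρ : α⁻¹ - 1 = (1 - α) / α := by field_simp
    rw [hnext] at hu
    set t := (k : ℝ) * α + θ
    rcases lt_or_ge (Int.fract t) (1 - α) with ht | ht
    · have hc₀ : c = 0 := by rw [hc, sturmian, if_neg fun h => ht.not_ge h.1]
      rw [fract_add_of_lt hα₀.le (by linarith), add_div, div_self hα₀.ne'] at hu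
      refine ⟨false :: u, by simp [hc₀, standardBlock, sWord], .zero (by positivity) ?_ hu⟩
      rw [hρ]; gcongr
    · have hc₁ : c = 1 := by rw [hc, sturmian, if_pos ⟨ht, Int.fract_lt_one t⟩]
      rw [fract_add_of_le hα₁.le (by linarith)] at hu
      refine ⟨true :: u, by simp [hc₁, standardBlock, sWord], .one ?_ ?_ ?_⟩
      · rw [hρ]; gcongr
      · rw [add_sub_cancel, inv_eq_one_div]; gcongr; exact (Int.fract_lt_one t).le
      · convert hu using 1; field_simp; ring

theorem ne_nil_of_mem_Walpha {w : List ℝ} (hw : w ∈ Walpha α) : w ≠ [] :=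
  let ⟨_, _, hw_ne, _⟩ := hw
  hw_ne

theorem exists_standardBlock_zero_itinerary (hα : α ∈ Set.Ioo (0 : ℝ) 1) (a : ℕ → ℕ)
    {w : List ℝ} (hw : w ∈ Walpha α) :
    ∃ v x, w = v.flatMap (standardBlock a 0) ∧ 0 ≤ x ∧ IsItinerary (levelRatio α 0) x v := by
  obtain ⟨θ, -, hw⟩ := hw
  obtain ⟨-, k, hk⟩ := mem_SubZ_iff.1 hw
  obtain ⟨v, hwv, hv⟩ := exists_isItinerary_of_sturmian hα a hk
  exact ⟨v, _, hwv, div_nonneg (Int.fract_nonneg _) hα.1.le, hv⟩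

theorem exists_standardBlock_itinerary (hirr : Irrational α) (hα : α ∈ Set.Ioo (0 : ℝ) 1) (n : ℕ) :
    ∃ L : ℕ, ∀ w ∈ Walpha α, ∃ p v q x,
      w = p ++ v.flatMap (standardBlock (cfCoeff α) n) ++ q ∧
        p.length ≤ L ∧ q.length ≤ L ∧ 0 ≤ x ∧ IsItinerary (levelRatio α n) x v := by
  induction n with
  | zero =>
    refine ⟨0, fun w hw => ?_⟩
    obtain ⟨v, x, rfl, hx, hv⟩ := exists_standardBlock_zero_itinerary hα (cfCoeff α) hw
    exact ⟨[], v, [], x, by simp, le_rfl, le_rfl, hx, hv⟩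
  | succ n ih =>
    obtain ⟨L, hL⟩ := ih
    set τ := standardBlock (cfCoeff α) n with hτ
    set b := ⌊levelRatio α n⌋₊ with hb
    obtain ⟨S, hS⟩ : ∃ S, ∀ c, (τ c).length ≤ S :=
      ⟨_, fun c => Finset.le_sup (f := fun c => (τ c).length) (Finset.mem_univ c)⟩
    refine ⟨L + (b + 2) * S, fun w hw => ?_⟩
    obtain ⟨p, v, q, x, rfl, hp, hq, hx, hv⟩ := hL w hw
    obtain ⟨hg₀, hg₁⟩ := cfGauss_mem_Ioo hirr hα (n + 1)
    rw [levelRatio_eq_floor_add hirr hα n, ← hb] at hv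
    obtain ⟨p', v', q', y, rfl, hp', hq', hy, hv'⟩ := hv.exists_desubstitution hg₀ hg₁ hx
    refine ⟨p ++ p'.flatMap τ, v', q'.flatMap τ ++ q, y, ?_, ?_, ?_, hy, hv'⟩
    · simp only [List.flatMap_append, List.append_assoc, List.flatMap_assoc, hτ, hb,
        flatMap_standardBlock_sturmianSubst]
    · rw [List.length_append]
      exact add_le_add hp ((length_flatMap_le τ hS p').trans (Nat.mul_le_mul_right S hp'))
    · rw [List.length_append, add_comm]
      exact add_le_add hq ((length_flatMap_le τ hS q').trans (Nat.mul_le_mul_right S hq'))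

end SturmianWords

section Bound

variable {α : ℝ} {F : List ℝ → ℝ}

theorem standardBlock_le_max_mul_length (F : List ℝ → ℝ) (a : ℕ → ℕ) (n : ℕ) (c : Bool) :
    F (standardBlock a n c) ≤
      max (F (sWord a (n + 1)) / (sWord a (n + 1)).length) (F (sWord a n) / (sWord a n).length) *
        (standardBlock a n c).length := by
  have length_pos (m : ℕ) : (0 : ℝ) < (sWord a m).length :=
    mod_cast List.length_pos_of_ne_nil (sWord_ne_nil a m)
  cases c with
  | false => exact (div_le_iff₀ (length_pos _)).1 (le_max_left _ _)
  | true => exact (div_le_iff₀ (length_pos _)).1 (le_max_right _ _)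

theorem exists_le_mul_length_add (hirr : Irrational α) (hα : α ∈ Set.Ioo (0 : ℝ) 1)
    (hF : SubadditiveOn F (insert [] (Walpha α))) (hnil : F [] = 0) (n : ℕ) {M : ℝ}
    (hM : ∀ c, F (standardBlock (cfCoeff α) n c) ≤ M * (standardBlock (cfCoeff α) n c).length) :
    ∃ C : ℝ, ∀ w ∈ Walpha α, F w ≤ M * w.length + C := by
  have hW := isFactorial_insert_nil_Walpha α
  have blocks_le {m : ℕ} {M' : ℝ} (hM' : ∀ c, F (standardBlock (cfCoeff α) m c) ≤
      M' * (standardBlock (cfCoeff α) m c).length) (v : List Bool) :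
      ∀ u ∈ v.map (standardBlock (cfCoeff α) m), F u ≤ M' * u.length :=
    List.forall_mem_map.2 fun c _ => hM' c
  obtain ⟨K, hK₀⟩ : ∃ K : ℝ, ∀ c,
      F (standardBlock (cfCoeff α) 0 c) ≤ K * (standardBlock (cfCoeff α) 0 c).length :=
    ⟨_, standardBlock_le_max_mul_length F _ 0⟩
  have hK : ∀ w ∈ insert [] (Walpha α), F w ≤ K * w.length := by
    rintro w (rfl | hw)
    · simp [hnil]
    obtain ⟨v, -, rfl, -, -⟩ := exists_standardBlock_zero_itinerary hα (cfCoeff α) hw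
    exact hF.flatten_le hW hnil (blocks_le hK₀ v) (.inr hw)
  obtain ⟨L, hL⟩ := exists_standardBlock_itinerary hirr hα n
  refine ⟨2 * (|K - M| * L), fun w hw => ?_⟩
  obtain ⟨p, v, q, -, rfl, hp, hq, -, -⟩ := hL w hw
  exact hF.append_flatten_append_le hW hnil hK (blocks_le hM v) hp hq (.inr hw)

end Bound

theorem subadditive_limsup_le_max_general {α : ℝ} (hirr : Irrational α)
    (hα : α ∈ Set.Ioo (0 : ℝ) 1) {F : List ℝ → ℝ}
    (hsub : ∀ u v : List ℝ, u ∈ Walpha α → v ∈ Walpha α → u ++ v ∈ Walpha α →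
      F (u ++ v) ≤ F u + F v) (n : ℕ) {c : ℝ}
    (hc : max (F (sWord (cfCoeff α) (n + 1)) / (sWord (cfCoeff α) (n + 1)).length)
      (F (sWord (cfCoeff α) n) / (sWord (cfCoeff α) n).length) < c) :
    ∃ N : ℕ, ∀ w ∈ Walpha α, N ≤ w.length → F w / w.length ≤ c := by
  let F₀ := Function.update F [] 0
  have hF₀ {w : List ℝ} (hw : w ≠ []) : F₀ w = F w := Function.update_of_ne hw _ _
  obtain ⟨C, hC⟩ := exists_le_mul_length_add (F := F₀) hirr hα
    ((isFactorial_insert_nil_Walpha α).subadditiveOn_update_nil hsub)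
    (Function.update_self _ _ _) n (standardBlock_le_max_mul_length F₀ _ n)
  rw [hF₀ (sWord_ne_nil _ _), hF₀ (sWord_ne_nil _ _)] at hC
  refine exists_forall_div_length_le (C := C) (fun w hw => ?_) hc
  simpa only [hF₀ (ne_nil_of_mem_Walpha hw)] using hC w hw

theorem subadditive_limsup_le_max
    (α : ℝ) (hirr : Irrational α) (hα : α ∈ Set.Ioo (0 : ℝ) 1)
    (F : List ℝ → ℝ)
    (hnonneg : ∀ w ∈ Walpha α, 0 ≤ F w)
    (hsub : ∀ a b : List ℝ, a ∈ Walpha α → b ∈ Walpha α → a ++ b ∈ Walpha α →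
      F (a ++ b) ≤ F a + F b) :
    (∀ n : ℕ, 1 ≤ n → ∀ ε > (0 : ℝ), ∃ N : ℕ, ∀ w ∈ Walpha α, N ≤ w.length →
      F w / w.length ≤
        max (F (sWord (cfCoeff α) (n + 1)) / (sWord (cfCoeff α) (n + 1)).length)
          (F (sWord (cfCoeff α) n) / (sWord (cfCoeff α) n).length) + ε) ∧
    (∀ ε > (0 : ℝ), ∃ N : ℕ, ∀ w ∈ Walpha α, N ≤ w.length →
      F w / w.length ≤
        (⨅ n : ℕ, max (F (sWord (cfCoeff α) (n + 2)) / (sWord (cfCoeff α) (n + 2)).length)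
          (F (sWord (cfCoeff α) (n + 1)) / (sWord (cfCoeff α) (n + 1)).length)) + ε) := by
  refine ⟨fun n _ ε hε => subadditive_limsup_le_max_general hirr hα hsub n (by linarith),
    fun ε hε => ?_⟩
  obtain ⟨n, hn⟩ := exists_lt_of_ciInf_lt (lt_add_of_pos_right (⨅ n : ℕ,
    max (F (sWord (cfCoeff α) (n + 2)) / (sWord (cfCoeff α) (n + 2)).length)
      (F (sWord (cfCoeff α) (n + 1)) / (sWord (cfCoeff α) (n + 1)).length)) hε)
  exact subadditive_limsup_le_max_general hirr hα hsub (n + 1) hn
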